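/- Any bounded below acyclic cochain complex in an abelian category A with exact coproducts is coacyclic, and any bounded above acyclic complex in an abelian category with exact products is contraacyclic. -/

import Mathlib

open CategoryTheory CategoryTheory.Limits CategoryTheory.Pretriangulated

variable {A : Type u} [Category.{v} A] [Abelian A]

/-- The totalization of a (short exact) sequence of complexes `K ⟶ L ⟶ M`, realized
(up to isomorphism in the homotopy category) as a shifted mapping cone of the canonical
map `Cone(f) ⟶ M`. -/
noncomputable def totSES {K L M : CochainComplex A ℤ} (f : K ⟶ L) (g : L ⟶ M)
    (hfg : f ≫ g = 0) : CochainComplex A ℤ :=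
  (CochainComplex.mappingCone
    (CochainComplex.mappingCone.desc f 0 g (by simp [hfg])))⟦(-1 : ℤ)⟧

/-- A class of objects of the homotopy category which contains the totalizations of all
degreewise short exact sequences of complexes and is thick: closed under isomorphisms,
zero objects, shifts, extensions (cones) and direct summands. -/
structure TotClosed (P : HomotopyCategory A (ComplexShape.up ℤ) → Prop) : Prop where
  tot : ∀ {K L M : CochainComplex A ℤ} (f : K ⟶ L) (g : L ⟶ M) (hfg : f ≫ g = 0),
    (ShortComplex.mk f g hfg).ShortExact →
    P ((HomotopyCategory.quotient A (ComplexShape.up ℤ)).obj (totSES f g hfg))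
  zero : ∀ (X : HomotopyCategory A (ComplexShape.up ℤ)), IsZero X → P X
  iso : ∀ {X Y : HomotopyCategory A (ComplexShape.up ℤ)}, (X ≅ Y) → P X → P Y
  shift : ∀ (X : HomotopyCategory A (ComplexShape.up ℤ)) (n : ℤ), P X → P (X⟦n⟧)
  ext₂ : ∀ (T : Triangle (HomotopyCategory A (ComplexShape.up ℤ))),
    T ∈ distinguishedTriangles → P T.obj₁ → P T.obj₃ → P T.obj₂
  smd : ∀ (X Y : HomotopyCategory A (ComplexShape.up ℤ)), P (X ⊞ Y) → P X

/-- A complex is absolutely acyclic if its image in the homotopy category belongs to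
the minimal thick subcategory containing the totalizations of short exact sequences. -/
def IsAbsolutelyAcyclic (X : HomotopyCategory A (ComplexShape.up ℤ)) : Prop :=
  ∀ P, TotClosed P → P X

/-- Closure under all existing coproducts. -/
def CoprodClosed (P : HomotopyCategory A (ComplexShape.up ℤ) → Prop) : Prop :=
  ∀ {ι : Type v} (F : ι → HomotopyCategory A (ComplexShape.up ℤ))
    (c : Cofan F), IsColimit c → (∀ i, P (F i)) → P c.pt

/-- A complex is coacyclic if its image in the homotopy category belongs to every thick
class containing the totalizations which is moreover closed under coproducts. -/
def IsCoacyclic (X : HomotopyCategory A (ComplexShape.up ℤ)) : Prop :=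
  ∀ P, TotClosed P → CoprodClosed P → P X


/-- Closure under all existing products. -/
def ProdClosed (P : HomotopyCategory A (ComplexShape.up ℤ) → Prop) : Prop :=
  ∀ {ι : Type v} (F : ι → HomotopyCategory A (ComplexShape.up ℤ))
    (c : Fan F), IsLimit c → (∀ i, P (F i)) → P c.pt

/-- A complex is contraacyclic if its image in the homotopy category belongs to every
thick class containing the totalizations which is moreover closed under products. -/
def IsContraacyclic (X : HomotopyCategory A (ComplexShape.up ℤ)) : Prop :=
  ∀ P, TotClosed P → ProdClosed P → P X


namespace Stmt9

/-- Telescope exactness in an abelian category, eventually constant case. -/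
lemma tele {B : Type*} [Category* B] [Abelian B] {T : ℕ → B} {C W : B}
    (i : ∀ n, T n ⟶ C) (t : ∀ n, T n ⟶ T (n + 1)) (ht : ∀ n, t n ≫ i (n + 1) = i n)
    (N : ℕ) (hi : ∀ n, N ≤ n → IsIso (i n))
    (inj : ∀ n, T n ⟶ W)
    (ext : ∀ {Y : B} (u v : W ⟶ Y), (∀ n, inj n ≫ u = inj n ≫ v) → u = v)
    (a : W ⟶ W) (ha : ∀ n, inj n ≫ a = inj n - t n ≫ inj (n + 1))
    (b : W ⟶ C) (hb : ∀ n, inj n ≫ b = i n) (w : a ≫ b = 0) [Mono a] :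
    (ShortComplex.mk a b w).ShortExact := by
  have := hi N le_rfl
  have hbE : Epi b := by
    have : Epi (inj N ≫ b) := by rw [hb]; infer_instance
    exact epi_of_epi (inj N) b
  refine { exact := ShortComplex.exact_of_g_is_cokernel _ ?_, mono_f := by assumption, epi_g := hbE }
  have key : ∀ {Y : B} (h : W ⟶ Y), a ≫ h = 0 → b ≫ inv (i N) ≫ inj N ≫ h = h := by
    intro Y h h0
    have h1 : ∀ n, inj n ≫ h = t n ≫ inj (n + 1) ≫ h := by
      intro n
      have := inj n ≫= h0
      rw [← Category.assoc, ha, Preadditive.sub_comp, comp_zero, sub_eq_zero] at this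
      simpa using this
    -- above `N`
    have up : ∀ d, i (N + d) ≫ inv (i N) ≫ inj N ≫ h = inj (N + d) ≫ h := by
      intro d
      induction d with
      | zero => simp
      | succ d ih =>
        have e1 := hi (N + d) (by omega)
        have e2 := hi (N + d + 1) (by omega)
        have : IsIso (t (N + d)) := by
          have : IsIso (t (N + d) ≫ i (N + d + 1)) := by rw [ht]; exact e1
          exact IsIso.of_isIso_comp_right _ (i (N + d + 1))
        change i (N + d + 1) ≫ _ = inj (N + d + 1) ≫ h
        rw [← cancel_epi (t (N + d)), ← h1, ← ih, ← Category.assoc, ht]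
    have down : ∀ d n, n + d = N → i n ≫ inv (i N) ≫ inj N ≫ h = inj n ≫ h := by
      intro d
      induction d with
      | zero => intro n hn; obtain rfl : n = N := by omega
                simp
      | succ d ih =>
        intro n hn
        rw [h1 n, ← ih (n + 1) (by omega), ← Category.assoc (t n), ht]
    apply ext
    intro n
    rw [← Category.assoc, hb]
    rcases le_total N n with hn | hn
    · obtain ⟨d, rfl⟩ := Nat.exists_eq_add_of_le hn
      exact up d
    · obtain ⟨d, rfl⟩ := Nat.exists_eq_add_of_le hn
      exact down d n rfl
  exact CokernelCofork.IsColimit.ofπ _ _ (fun h hh => inv (i N) ≫ inj N ≫ h)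
    (fun h hh => key h hh)
    (fun h hh m hm => by
      rw [← cancel_epi b, hm]; exact (key h hh).symm)

lemma tele_op {B : Type*} [Category* B] [Abelian B] {T : ℕ → B} {C W : B}
    (i : ∀ n, C ⟶ T n) (t : ∀ n, T (n + 1) ⟶ T n) (ht : ∀ n, i (n + 1) ≫ t n = i n)
    (N : ℕ) (hi : ∀ n, N ≤ n → IsIso (i n))
    (pr : ∀ n, W ⟶ T n)
    (ext : ∀ {Y : B} (u v : Y ⟶ W), (∀ n, u ≫ pr n = v ≫ pr n) → u = v)
    (a : W ⟶ W) (ha : ∀ n, a ≫ pr n = pr n - pr (n + 1) ≫ t n)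
    (b : C ⟶ W) (hb : ∀ n, b ≫ pr n = i n) (w : b ≫ a = 0) [Epi a] :
    (ShortComplex.mk b a w).ShortExact := by
  have := tele (B := Bᵒᵖ) (fun n => (i n).op) (fun n => (t n).op)
    (fun n => by rw [← op_comp, ht]) N (fun n hn => by have := hi n hn; infer_instance)
    (fun n => (pr n).op)
    (fun u v h => Quiver.Hom.unop_inj (ext _ _ (fun n => Quiver.Hom.op_inj (h n))))
    a.op (fun n => by rw [← op_comp, ha]; rfl) b.op (fun n => by rw [← op_comp, hb])
    (by rw [← op_comp, w, op_zero])
  exact this.unop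

/-- Constant telescope: `1 - shift` is mono; generalized to monos into a constant system. -/
lemma tele_mono {B : Type*} [Category* B] [Preadditive B] {T : ℕ → B} {C W WC : B}
    (i : ∀ n, T n ⟶ C) (t : ∀ n, T n ⟶ T (n + 1)) (ht : ∀ n, t n ≫ i (n + 1) = i n)
    (inj : ∀ n, T n ⟶ W)
    (ext : ∀ {Y : B} (u v : W ⟶ Y), (∀ n, inj n ≫ u = inj n ≫ v) → u = v)
    (injC : ℕ → (C ⟶ WC))
    (desc : ∀ {Y : B} (h : ℕ → (C ⟶ Y)), ∃ u : WC ⟶ Y, ∀ n, injC n ≫ u = h n)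
    (m : W ⟶ WC) (hm : ∀ n, inj n ≫ m = i n ≫ injC n) [Mono m]
    (a : W ⟶ W) (ha : ∀ n, inj n ≫ a = inj n - t n ≫ inj (n + 1)) : Mono a := by
  obtain ⟨r, hr⟩ := desc (fun n => - ∑ j ∈ Finset.range n, injC j)
  have : a ≫ m ≫ r = m := by
    apply ext
    intro n
    rw [← Category.assoc, ha, Preadditive.sub_comp, Category.assoc, ← Category.assoc (inj n), hm,
      ← Category.assoc (inj (n+1)), hm, Category.assoc, Category.assoc, hr, hr,
      ← Category.assoc (t n), ht, ← Preadditive.comp_sub]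
    congr 1
    rw [Finset.sum_range_succ]; abel
  have : Mono (a ≫ m ≫ r) := by rw [this]; infer_instance
  exact mono_of_mono a (m ≫ r)

lemma tele_epi {B : Type*} [Category* B] [Preadditive B] {T : ℕ → B} {C W WC : B}
    (i : ∀ n, C ⟶ T n) (t : ∀ n, T (n + 1) ⟶ T n) (ht : ∀ n, i (n + 1) ≫ t n = i n)
    (pr : ∀ n, W ⟶ T n)
    (ext : ∀ {Y : B} (u v : Y ⟶ W), (∀ n, u ≫ pr n = v ≫ pr n) → u = v)
    (prC : ℕ → (WC ⟶ C))
    (lift : ∀ {Y : B} (h : ℕ → (Y ⟶ C)), ∃ u : Y ⟶ WC, ∀ n, u ≫ prC n = h n)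
    (m : WC ⟶ W) (hm : ∀ n, m ≫ pr n = prC n ≫ i n) [Epi m]
    (a : W ⟶ W) (ha : ∀ n, a ≫ pr n = pr n - pr (n + 1) ≫ t n) : Epi a := by
  have := tele_mono (B := Bᵒᵖ) (fun n => (i n).op) (fun n => (t n).op)
    (fun n => by rw [← op_comp, ht]) (fun n => (pr n).op)
    (fun u v h => Quiver.Hom.unop_inj (ext _ _ (fun n => Quiver.Hom.op_inj (h n))))
    (fun n => (prC n).op)
    (fun h => by
      obtain ⟨u, hu⟩ := lift (fun n => (h n).unop)
      exact ⟨u.op, fun n => Quiver.Hom.unop_inj (hu n)⟩)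
    m.op (fun n => by rw [← op_comp, hm]; rfl) a.op (fun n => by rw [← op_comp, ha]; rfl)
  exact unop_epi_of_mono a.op


/-- The class of complexes whose image in the homotopy category satisfies `P`. -/
abbrev onC (P : HomotopyCategory A (ComplexShape.up ℤ) → Prop) (K : CochainComplex A ℤ) : Prop :=
  P ((HomotopyCategory.quotient A (ComplexShape.up ℤ)).obj K)

lemma ext₃ {P : HomotopyCategory A (ComplexShape.up ℤ) → Prop} (hP : TotClosed P)
    (T : Triangle (HomotopyCategory A (ComplexShape.up ℤ)))
    (hT : T ∈ distinguishedTriangles) (h₁ : P T.obj₁) (h₂ : P T.obj₂) : P T.obj₃ :=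
  hP.ext₂ _ (rot_of_distTriang _ hT) h₂ (hP.shift _ _ h₁)

lemma ext₁ {P : HomotopyCategory A (ComplexShape.up ℤ) → Prop} (hP : TotClosed P)
    (T : Triangle (HomotopyCategory A (ComplexShape.up ℤ)))
    (hT : T ∈ distinguishedTriangles) (h₂ : P T.obj₂) (h₃ : P T.obj₃) : P T.obj₁ :=
  hP.ext₂ _ (inv_rot_of_distTriang _ hT) (hP.shift _ _ h₃) h₂

lemma cone_mem {P : HomotopyCategory A (ComplexShape.up ℤ) → Prop} (hP : TotClosed P)
    {K L M : CochainComplex A ℤ} (f : K ⟶ L) (g : L ⟶ M) (hfg : f ≫ g = 0)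
    (h : (ShortComplex.mk f g hfg).ShortExact) :
    onC P (CochainComplex.mappingCone
    (CochainComplex.mappingCone.desc f 0 g (by simp [hfg]))) := by
  have h1 := hP.shift _ 1 (hP.tot f g hfg h)
  refine hP.iso ?_ h1
  refine ((HomotopyCategory.quotient A (ComplexShape.up ℤ)).commShiftIso (1 : ℤ)).symm.app _ ≪≫ ?_
  exact (HomotopyCategory.quotient A (ComplexShape.up ℤ)).mapIso
    ((shiftEquiv (CochainComplex A ℤ) (1 : ℤ)).counitIso.app _)

lemma ses₃ {P : HomotopyCategory A (ComplexShape.up ℤ) → Prop} (hP : TotClosed P)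
    {K L M : CochainComplex A ℤ} (f : K ⟶ L) (g : L ⟶ M) (hfg : f ≫ g = 0)
    (h : (ShortComplex.mk f g hfg).ShortExact) (hK : onC P K) (hL : onC P L) : onC P M := by
  have h1 := cone_mem hP f g hfg h
  have h2 := ext₃ hP _ (HomotopyCategory.mappingCone_triangleh_distinguished f) hK hL
  exact hP.ext₂ _ (HomotopyCategory.mappingCone_triangleh_distinguished
    (CochainComplex.mappingCone.desc f 0 g (by simp [hfg]))) h2 h1

lemma ses₂ {P : HomotopyCategory A (ComplexShape.up ℤ) → Prop} (hP : TotClosed P)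
    {K L M : CochainComplex A ℤ} (f : K ⟶ L) (g : L ⟶ M) (hfg : f ≫ g = 0)
    (h : (ShortComplex.mk f g hfg).ShortExact) (hK : onC P K) (hM : onC P M) : onC P L := by
  have h1 := cone_mem hP f g hfg h
  have h2 := ext₁ hP _ (HomotopyCategory.mappingCone_triangleh_distinguished
    (CochainComplex.mappingCone.desc f 0 g (by simp [hfg]))) hM h1
  exact hP.ext₂ _ (HomotopyCategory.mappingCone_triangleh_distinguished f) hK h2

lemma ses₁ {P : HomotopyCategory A (ComplexShape.up ℤ) → Prop} (hP : TotClosed P)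
    {K L M : CochainComplex A ℤ} (f : K ⟶ L) (g : L ⟶ M) (hfg : f ≫ g = 0)
    (h : (ShortComplex.mk f g hfg).ShortExact) (hL : onC P L) (hM : onC P M) : onC P K := by
  have h1 := cone_mem hP f g hfg h
  have h2 := ext₁ hP _ (HomotopyCategory.mappingCone_triangleh_distinguished
    (CochainComplex.mappingCone.desc f 0 g (by simp [hfg]))) hM h1
  exact ext₁ hP _ (HomotopyCategory.mappingCone_triangleh_distinguished f) hL h2

/-- An acyclic complex concentrated in two consecutive degrees is contractible. -/
lemma two_term (S : CochainComplex A ℤ) (hS : ∀ n, S.ExactAt n) (a : ℤ)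
    (h : ∀ n, n ≠ a → n ≠ a + 1 → IsZero (S.X n)) : Nonempty (Homotopy (𝟙 S) 0) := by
  have hmono : Mono (S.d a (a + 1)) := by
    have := (S.exactAt_iff' (a - 1) a (a + 1) (by simp) (by simp)).1 (hS a)
    exact this.mono_g ((h (a - 1) (by omega) (by omega)).eq_of_src _ _)
  have hepi : Epi (S.d a (a + 1)) := by
    have := (S.exactAt_iff' a (a + 1) (a + 2) (by simp) (by simp; ring)).1 (hS (a + 1))
    exact this.epi_f ((h (a + 2) (by omega) (by omega)).eq_of_tgt _ _)
  have hiso : IsIso (S.d a (a + 1)) := isIso_of_mono_of_epi _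
  refine ⟨{
    hom := fun i j => if hij : i = a + 1 ∧ j = a then
      eqToHom (by rw [hij.1]) ≫ inv (S.d a (a + 1)) ≫ eqToHom (by rw [hij.2]) else 0
    zero := fun i j hij => dif_neg (fun h => hij (by simp [h.1, h.2]))
    comm := fun i => ?_ }⟩
  rw [dNext_eq _ (show (ComplexShape.up ℤ).Rel i (i + 1) by simp),
    prevD_eq _ (show (ComplexShape.up ℤ).Rel (i - 1) i by simp)]
  by_cases h1 : i = a
  · subst h1
    simp
  · by_cases h2 : i = a + 1
    · subst h2
      have : a + 1 - 1 = a := by ring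
      rw [dif_neg (by omega), dif_pos (by omega)]
      simp only [eqToHom_refl, Category.id_comp, comp_zero, zero_add, Category.assoc,
        HomologicalComplex.zero_f, add_zero, HomologicalComplex.id_f]
      have e : ∀ k (hk : k = a), eqToHom (by rw [hk]) ≫ S.d k (a + 1) = S.d a (a + 1) := by
        rintro k rfl; simp
      rw [e _ this, IsIso.inv_hom_id]
    · exact (h i h1 h2).eq_of_src _ _

lemma isIso_πTruncGE_f_aux {ι ι' : Type*} {c : ComplexShape ι} {c' : ComplexShape ι'}
    {B : Type*} [Category* B] [Abelian B]
    (K : HomologicalComplex B c') (e : c.Embedding c') [e.IsTruncGE] {i : ι} {i' : ι'}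
    (hi' : e.f i = i') (hi : ¬ e.BoundaryGE i) : IsIso ((K.πTruncGE e).f i') := by
  unfold HomologicalComplex.πTruncGE
  have := (e.isIso_liftExtend_f_iff (K.restrictionToTruncGE' e)
    (K.restrictionToTruncGE'_hasLift e) hi').2 (K.isIso_restrictionToTruncGE' e i hi)
  exact this

lemma isIso_πTruncGE_f (K : CochainComplex A ℤ) (n i : ℤ) (hi : n < i) :
    IsIso ((K.πTruncGE n).f i) := by
  refine isIso_πTruncGE_f_aux K (ComplexShape.embeddingUpIntGE n) (i := (i - n).natAbs) ?_ ?_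
  · change n + ((i - n).natAbs : ℤ) = i; omega
  · intro h
    rw [ComplexShape.boundaryGE_embeddingUpIntGE_iff, Int.natAbs_eq_zero] at h
    omega

lemma isIso_ιTruncLE_f (K : CochainComplex A ℤ) (n i : ℤ) (hi : i < n) :
    IsIso ((K.ιTruncLE n).f i) := by
  have := isIso_πTruncGE_f_aux K.op (ComplexShape.embeddingUpIntLE n).op
    (i := (n - i).natAbs) (i' := i) (by change n - ((n - i).natAbs : ℤ) = i; omega) (by
      intro h
      rw [ComplexShape.Embedding.op_boundaryGE_iff, ComplexShape.boundaryLE_embeddingUpIntLE_iff,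
        Int.natAbs_eq_zero] at h
      omega)
  exact inferInstanceAs (IsIso ((K.op.πTruncGE (ComplexShape.embeddingUpIntLE n).op).f i).unop)

/-- Bounded acyclic complexes. -/
lemma bounded {P : HomotopyCategory A (ComplexShape.up ℤ) → Prop} (hP : TotClosed P) (m : ℕ) :
    ∀ (K : CochainComplex A ℤ) (_ : ∀ n, K.ExactAt n) (a : ℤ)
      (_ : ∀ n, n < a → IsZero (K.X n)) (_ : ∀ n, a + m ≤ n → IsZero (K.X n)), onC P K := by
  induction m with
  | zero =>
    intro K hK a h1 h2
    refine hP.zero _ ((HomotopyCategory.quotient A _).map_isZero ?_)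
    rw [IsZero.iff_id_eq_zero]
    ext n
    rcases lt_or_ge n a with hn | hn
    · exact (h1 n hn).eq_of_src _ _
    · exact (h2 n (by simpa using hn)).eq_of_src _ _
  | succ m ih =>
    intro K hK a h1 h2
    have hses := K.shortComplexTruncLE_shortExact (a + 1)
    have hf : ∀ n, (K.truncLE (a + 1)).ExactAt n :=
      HomologicalComplex.Acyclic.truncLE (K := K) hK _
    have hfm : ∀ n, Mono ((K.shortComplexTruncLE (a + 1)).f.f n) := fun n => by
      have := hses.mono_f; infer_instance
    have hge : ∀ n, Epi ((K.shortComplexTruncLE (a + 1)).g.f n) := fun n => by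
      have := hses.epi_g; infer_instance
    have hX₁ : onC P (K.shortComplexTruncLE (a + 1)).X₁ := by
      apply hP.zero
      rw [HomotopyCategory.isZero_quotient_obj_iff]
      refine two_term _ hf a ?_
      intro n n1 n2
      rcases lt_or_ge n a with hn | hn
      · exact (h1 n hn).of_mono ((K.shortComplexTruncLE (a + 1)).f.f n)
      · exact (K.truncLE (a + 1)).isZero_of_isStrictlyLE (a + 1) n (by omega)
    refine ses₂ hP _ _ (K.shortComplexTruncLE (a + 1)).zero hses hX₁ ?_
    apply ih _ _ (a + 1)
    · intro n hn
      rcases lt_or_ge n a with hn' | hn'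
      · exact (h1 n hn').of_epi ((K.shortComplexTruncLE (a + 1)).g.f n)
      · have : IsIso ((K.shortComplexTruncLE (a + 1)).f.f n) :=
          isIso_ιTruncLE_f K (a + 1) n (by omega)
        rw [IsZero.iff_id_eq_zero, ← cancel_epi ((K.shortComplexTruncLE (a + 1)).g.f n),
          ← cancel_epi ((K.shortComplexTruncLE (a + 1)).f.f n), comp_zero, comp_zero,
          Category.comp_id, ← HomologicalComplex.comp_f, ShortComplex.zero,
          HomologicalComplex.zero_f]
    · intro n hn
      exact (h2 n (by push_cast; omega)).of_epi ((K.shortComplexTruncLE (a + 1)).g.f n)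
    · intro n
      rw [HomologicalComplex.exactAt_iff_isZero_homology]
      have := (hses.homology_exact₃ n (n + 1) (by simp))
      refine this.isZero_of_both_zeros ?_ ?_
      · exact ((hK n).isZero_homology).eq_of_src _ _
      · exact ((hf (n + 1)).isZero_homology).eq_of_tgt _ _

section coprod

variable [HasCoproducts.{0} A] {T : ℕ → CochainComplex A ℤ} {c : Cofan T}

lemma deg_desc (hc : IsColimit c) (k : ℤ) {Z : A} (g : ∀ n, (T n).X k ⟶ Z) :
    ∃ u : c.pt.X k ⟶ Z, ∀ n, (c.inj n).f k ≫ u = g n := by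
  have h := isColimitOfPreserves (HomologicalComplex.eval A (ComplexShape.up ℤ) k) hc
  let s : Cocone (Discrete.functor T ⋙ HomologicalComplex.eval A (ComplexShape.up ℤ) k) :=
    ⟨Z, Discrete.natTrans (fun n => g n.as)⟩
  exact ⟨h.desc s, fun n => h.fac s ⟨n⟩⟩

lemma deg_ext (hc : IsColimit c) (k : ℤ) {Z : A} (u v : c.pt.X k ⟶ Z)
    (huv : ∀ n, (c.inj n).f k ≫ u = (c.inj n).f k ≫ v) : u = v := by
  have h := isColimitOfPreserves (HomologicalComplex.eval A (ComplexShape.up ℤ) k) hc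
  exact h.hom_ext (fun ⟨n⟩ => huv n)

lemma homotopy_ext (hc : IsColimit c) {Y : CochainComplex A ℤ} (u v : c.pt ⟶ Y)
    (h : ∀ n, Homotopy (c.inj n ≫ u) (c.inj n ≫ v)) : Nonempty (Homotopy u v) := by
  choose H hH using fun (i j : ℤ) => deg_desc hc i (fun n => (h n).hom i j)
  refine ⟨{ hom := H, zero := ?_, comm := ?_ }⟩
  · intro i j hij
    apply deg_ext hc
    intro n
    rw [hH, (h n).zero i j hij, comp_zero]
  · intro i
    apply deg_ext hc
    intro n
    have := (h n).comm i
    rw [HomologicalComplex.comp_f, HomologicalComplex.comp_f] at this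
    rw [this, Preadditive.comp_add, Preadditive.comp_add, ← dNext_comp_left, ← prevD_comp_left]
    simp only [hH]

lemma coprod_mem (hc : IsColimit c) {P : HomotopyCategory A (ComplexShape.up ℤ) → Prop} (hQ : CoprodClosed P)
    (hT : ∀ n, onC P (T n)) : onC P c.pt := by
  let q := HomotopyCategory.quotient A (ComplexShape.up ℤ)
  have key : ∀ {Y : HomotopyCategory A (ComplexShape.up ℤ)} (u v : q.obj c.pt ⟶ Y),
      (∀ n, q.map (c.inj n) ≫ u = q.map (c.inj n) ≫ v) → u = v := by
    intro Y u v huv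
    obtain ⟨Y, rfl⟩ := HomotopyCategory.quotient_obj_surjective Y
    obtain ⟨u, rfl⟩ := q.map_surjective u
    obtain ⟨v, rfl⟩ := q.map_surjective v
    obtain ⟨h⟩ := homotopy_ext hc u v (fun n => HomotopyCategory.homotopyOfEq _ _ (by
      rw [Functor.map_comp, Functor.map_comp]; exact huv n))
    exact HomotopyCategory.eq_of_homotopy _ _ h
  have ex : ∀ (Y : HomotopyCategory A (ComplexShape.up ℤ)) (g : ∀ n, q.obj (T n) ⟶ Y),
      ∃ u : q.obj c.pt ⟶ Y, ∀ n, q.map (c.inj n) ≫ u = g n := by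
    intro Y g
    obtain ⟨Y, rfl⟩ := HomotopyCategory.quotient_obj_surjective Y
    choose g' hg' using fun n => q.map_surjective (g n)
    refine ⟨q.map (Cofan.IsColimit.desc hc g'), fun n => ?_⟩
    rw [← hg', ← Functor.map_comp, Cofan.IsColimit.fac]
  choose D hD using ex
  exact hQ (ι := ULift.{v} ℕ) (fun n => q.obj (T n.down))
    (Cofan.mk (q.obj c.pt) (fun n => q.map (c.inj n.down)))
    (Cofan.IsColimit.mk _ (fun s => D s.pt (fun n => s.inj ⟨n⟩))
      (fun s n => hD s.pt (fun n => s.inj ⟨n⟩) n.down)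
      (fun s m hm => key _ _ (fun n => (hm ⟨n⟩).trans (hD s.pt (fun n => s.inj ⟨n⟩) n).symm)))
    (fun n => hT n.down)

end coprod

section prod

variable [HasProducts.{0} A] {T : ℕ → CochainComplex A ℤ} {c : Fan T}

lemma deg_lift (hc : IsLimit c) (k : ℤ) {Z : A} (g : ∀ n, Z ⟶ (T n).X k) :
    ∃ u : Z ⟶ c.pt.X k, ∀ n, u ≫ (c.proj n).f k = g n := by
  have h := isLimitOfPreserves (HomologicalComplex.eval A (ComplexShape.up ℤ) k) hc
  let s : Cone (Discrete.functor T ⋙ HomologicalComplex.eval A (ComplexShape.up ℤ) k) :=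
    ⟨Z, Discrete.natTrans (fun n => g n.as)⟩
  exact ⟨h.lift s, fun n => h.fac s ⟨n⟩⟩

lemma deg_ext' (hc : IsLimit c) (k : ℤ) {Z : A} (u v : Z ⟶ c.pt.X k)
    (huv : ∀ n, u ≫ (c.proj n).f k = v ≫ (c.proj n).f k) : u = v := by
  have h := isLimitOfPreserves (HomologicalComplex.eval A (ComplexShape.up ℤ) k) hc
  exact h.hom_ext (fun ⟨n⟩ => huv n)

lemma homotopy_ext' (hc : IsLimit c) {Y : CochainComplex A ℤ} (u v : Y ⟶ c.pt)
    (h : ∀ n, Homotopy (u ≫ c.proj n) (v ≫ c.proj n)) : Nonempty (Homotopy u v) := by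
  choose H hH using fun (i j : ℤ) => deg_lift hc j (fun n => (h n).hom i j)
  refine ⟨{ hom := H, zero := ?_, comm := ?_ }⟩
  · intro i j hij
    apply deg_ext' hc
    intro n
    rw [hH, (h n).zero i j hij, zero_comp]
  · intro i
    apply deg_ext' hc
    intro n
    have := (h n).comm i
    rw [HomologicalComplex.comp_f, HomologicalComplex.comp_f] at this
    rw [this, Preadditive.add_comp, Preadditive.add_comp, ← dNext_comp_right, ← prevD_comp_right]
    simp only [hH]

lemma prod_mem (hc : IsLimit c) {P : HomotopyCategory A (ComplexShape.up ℤ) → Prop} (hQ : ProdClosed P)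
    (hT : ∀ n, onC P (T n)) : onC P c.pt := by
  let q := HomotopyCategory.quotient A (ComplexShape.up ℤ)
  have key : ∀ {Y : HomotopyCategory A (ComplexShape.up ℤ)} (u v : Y ⟶ q.obj c.pt),
      (∀ n, u ≫ q.map (c.proj n) = v ≫ q.map (c.proj n)) → u = v := by
    intro Y u v huv
    obtain ⟨Y, rfl⟩ := HomotopyCategory.quotient_obj_surjective Y
    obtain ⟨u, rfl⟩ := q.map_surjective u
    obtain ⟨v, rfl⟩ := q.map_surjective v
    obtain ⟨h⟩ := homotopy_ext' hc u v (fun n => HomotopyCategory.homotopyOfEq _ _ (by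
      rw [Functor.map_comp, Functor.map_comp]; exact huv n))
    exact HomotopyCategory.eq_of_homotopy _ _ h
  have ex : ∀ (Y : HomotopyCategory A (ComplexShape.up ℤ)) (g : ∀ n, Y ⟶ q.obj (T n)),
      ∃ u : Y ⟶ q.obj c.pt, ∀ n, u ≫ q.map (c.proj n) = g n := by
    intro Y g
    obtain ⟨Y, rfl⟩ := HomotopyCategory.quotient_obj_surjective Y
    choose g' hg' using fun n => q.map_surjective (g n)
    refine ⟨q.map (Fan.IsLimit.lift hc g'), fun n => ?_⟩
    rw [← hg', ← Functor.map_comp, Fan.IsLimit.fac]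
  choose D hD using ex
  exact hQ (ι := ULift.{v} ℕ) (fun n => q.obj (T n.down))
    (Fan.mk (q.obj c.pt) (fun n => q.map (c.proj n.down)))
    (Fan.IsLimit.mk _ (fun s => D s.pt (fun n => s.proj ⟨n⟩))
      (fun s n => hD s.pt (fun n => s.proj ⟨n⟩) n.down)
      (fun s m hm => key _ _ (fun n => (hm ⟨n⟩).trans (hD s.pt (fun n => s.proj ⟨n⟩) n).symm)))
    (fun n => hT n.down)

end prod

lemma lim_map_epi {J : Type*} [Category* J] [HasLimitsOfShape J A]
    [HasExactLimitsOfShape J A] {X₁ X₂ : J ⥤ A} (φ : X₁ ⟶ X₂) [∀ j, Epi (φ.app j)]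
    {c₁ : Cone X₁} (hc₁ : IsLimit c₁) {c₂ : Cone X₂} (hc₂ : IsLimit c₂)
    (f : c₁.pt ⟶ c₂.pt) (hf : ∀ j, f ≫ c₂.π.app j = c₁.π.app j ≫ φ.app j) : Epi f := by
  have := NatTrans.epi_of_epi_app φ
  have h : Epi ((lim : (J ⥤ A) ⥤ A).map φ) := inferInstance
  refine ((MorphismProperty.epimorphisms A).arrow_mk_iso_iff ?_).2 h
  exact Arrow.isoMk
    (IsLimit.conePointUniqueUpToIso hc₁ (limit.isLimit _))
    (IsLimit.conePointUniqueUpToIso hc₂ (limit.isLimit _))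
    ((limit.isLimit X₂).hom_ext (fun j => by
      simp [hf]))

lemma co_main [HasCoproducts.{0} A] [AB4OfSize.{0} A] (C : CochainComplex A ℤ)
    (hac : ∀ n, C.ExactAt n) (N : ℤ) (hN : ∀ n, n < N → IsZero (C.X n))
    {P : HomotopyCategory A (ComplexShape.up ℤ) → Prop} (hP : TotClosed P)
    (hQ : CoprodClosed P) : onC P C := by
  let T : ℕ → CochainComplex A ℤ := fun n => C.truncLE (n : ℤ)
  let i : ∀ n, T n ⟶ C := fun n => C.ιTruncLE (n : ℤ)
  have himono : ∀ n, Mono (i n) := fun n => inferInstanceAs (Mono (HomologicalComplex.ιTruncLE C (ComplexShape.embeddingUpIntLE (n : ℤ))))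
  have hiso : ∀ (n : ℕ) (k : ℤ), k < n → IsIso ((i n).f k) := fun n k hk =>
    isIso_ιTruncLE_f C n k hk
  have hzero : ∀ (n : ℕ) (k : ℤ), (n : ℤ) < k → IsZero ((T n).X k) := fun n k hk =>
    CochainComplex.isZero_of_isStrictlyLE (C.truncLE (n : ℤ)) (n : ℤ) k hk
  have hex : ∀ n, ∃ t : T n ⟶ T (n + 1), t ≫ i (n + 1) = i n := by
    intro n
    have h0 : i n ≫ cokernel.π (i (n + 1)) = 0 := by
      ext k
      rcases lt_or_ge (n : ℤ) k with hk | hk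
      · exact (hzero n k hk).eq_of_src _ _
      · have := hiso (n + 1) k (by push_cast; omega)
        rw [HomologicalComplex.comp_f]
        have h1 : (cokernel.π (i (n + 1))).f k = 0 := by
          rw [← cancel_epi ((i (n + 1)).f k), ← HomologicalComplex.comp_f, cokernel.condition]
          simp
        rw [h1, comp_zero]; rfl
    exact ⟨Abelian.monoLift (i (n + 1)) (i n) h0, Abelian.monoLift_comp _ _ _⟩
  choose t ht using hex
  let c := colimit.cocone (Discrete.functor T)
  have hc : IsColimit c := colimit.isColimit _
  let c : Cofan T := c
  have hc : IsColimit c := hc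
  let d : Cofan (fun _ : ℕ => C) := colimit.cocone (Discrete.functor (fun _ : ℕ => C))
  have hd : IsColimit d := colimit.isColimit _
  have ext : ∀ {Y : CochainComplex A ℤ} (u v : c.pt ⟶ Y),
      (∀ n, c.inj n ≫ u = c.inj n ≫ v) → u = v := fun u v h =>
    Cofan.IsColimit.hom_ext hc _ _ h
  let a : c.pt ⟶ c.pt := Cofan.IsColimit.desc hc (fun n => c.inj n - t n ≫ c.inj (n + 1))
  have ha : ∀ n, c.inj n ≫ a = c.inj n - t n ≫ c.inj (n + 1) := fun n =>
    Cofan.IsColimit.fac hc _ n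
  let b : c.pt ⟶ C := Cofan.IsColimit.desc hc i
  have hb : ∀ n, c.inj n ≫ b = i n := fun n => Cofan.IsColimit.fac hc _ n
  have w : a ≫ b = 0 := by
    apply ext
    intro n
    rw [← Category.assoc, ha, Preadditive.sub_comp, Category.assoc, hb, hb, ht, sub_self,
      comp_zero]
  let m : c.pt ⟶ d.pt := Cofan.IsColimit.desc hc (fun n => i n ≫ d.inj n)
  have hm : ∀ n, c.inj n ≫ m = i n ≫ d.inj n := fun n => Cofan.IsColimit.fac hc _ n
  have hmm : Mono m := by
    let φ : Discrete.functor T ⟶ Discrete.functor (fun _ : ℕ => C) :=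
      Discrete.natTrans (fun n => i n.as)
    have : ∀ j, Mono (φ.app j) := fun j => himono j.as
    have := NatTrans.mono_of_mono_app φ
    exact colim.map_mono' φ hc hd m (fun j => hm j.as)
  have hma : Mono a := tele_mono i t ht c.inj ext d.inj
    (fun h => ⟨Cofan.IsColimit.desc hd h, fun n => Cofan.IsColimit.fac hd _ n⟩) m hm a ha
  have hSES : (ShortComplex.mk a b w).ShortExact := by
    apply HomologicalComplex.shortExact_of_degreewise_shortExact
    intro k
    have : Mono (a.f k) := inferInstance
    exact tele (fun n => (i n).f k) (fun n => (t n).f k)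
      (fun n => by rw [← HomologicalComplex.comp_f, ht]) (k.toNat + 1)
      (fun n hn => hiso n k (by omega)) (fun n => (c.inj n).f k) (deg_ext hc k) (a.f k)
      (fun n => by rw [← HomologicalComplex.comp_f, ha]; rfl) (b.f k)
      (fun n => by rw [← HomologicalComplex.comp_f, hb])
      (by rw [← HomologicalComplex.comp_f, w]; rfl)
  have hT : ∀ n, onC P (T n) := by
    intro n
    refine bounded hP (n + 1 - N).toNat (T n) ?_ N ?_ ?_
    · exact HomologicalComplex.Acyclic.truncLE (K := C) hac _
    · intro k hk
      have : Mono ((i n).f k) := inferInstance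
      exact IsZero.of_mono ((i n).f k) (hN k hk)
    · intro k hk
      exact hzero n k (by omega)
  have hW := coprod_mem hc hQ hT
  exact ses₃ hP a b w hSES hW hW

lemma contra_main [HasProducts.{0} A] [AB4StarOfSize.{0} A] (C : CochainComplex A ℤ)
    (hac : ∀ n, C.ExactAt n) (N : ℤ) (hN : ∀ n, N < n → IsZero (C.X n))
    {P : HomotopyCategory A (ComplexShape.up ℤ) → Prop} (hP : TotClosed P)
    (hQ : ProdClosed P) : onC P C := by
  let T : ℕ → CochainComplex A ℤ := fun n => C.truncGE (-(n : ℤ))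
  let i : ∀ n, C ⟶ T n := fun n => C.πTruncGE (-(n : ℤ))
  have hiepi : ∀ n, Epi (i n) := fun n => inferInstanceAs (Epi (HomologicalComplex.πTruncGE C (ComplexShape.embeddingUpIntGE (-(n : ℤ)))))
  have hiso : ∀ (n : ℕ) (k : ℤ), -(n : ℤ) < k → IsIso ((i n).f k) := fun n k hk =>
    isIso_πTruncGE_f C (-(n : ℤ)) k hk
  have hzero : ∀ (n : ℕ) (k : ℤ), k < -(n : ℤ) → IsZero ((T n).X k) := fun n k hk =>
    CochainComplex.isZero_of_isStrictlyGE (C.truncGE (-(n : ℤ))) (-(n : ℤ)) k hk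
  have hex : ∀ n, ∃ t : T (n + 1) ⟶ T n, i (n + 1) ≫ t = i n := by
    intro n
    have h0 : kernel.ι (i (n + 1)) ≫ i n = 0 := by
      ext k
      rcases lt_or_ge k (-(n : ℤ)) with hk | hk
      · exact (hzero n k hk).eq_of_tgt _ _
      · have := hiso (n + 1) k (by push_cast; omega)
        rw [HomologicalComplex.comp_f]
        have h1 : (kernel.ι (i (n + 1))).f k = 0 := by
          rw [← cancel_mono ((i (n + 1)).f k), ← HomologicalComplex.comp_f, kernel.condition]
          simp
        rw [h1, zero_comp]; rfl
    exact ⟨Abelian.epiDesc (i (n + 1)) (i n) h0, Abelian.comp_epiDesc _ _ _⟩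
  choose t ht using hex
  let c : Fan T := limit.cone (Discrete.functor T)
  have hc : IsLimit c := limit.isLimit _
  let d : Fan (fun _ : ℕ => C) := limit.cone (Discrete.functor (fun _ : ℕ => C))
  have hd : IsLimit d := limit.isLimit _
  have ext : ∀ {Y : CochainComplex A ℤ} (u v : Y ⟶ c.pt),
      (∀ n, u ≫ c.proj n = v ≫ c.proj n) → u = v := fun u v h =>
    Fan.IsLimit.hom_ext hc _ _ h
  let a : c.pt ⟶ c.pt := Fan.IsLimit.lift hc (fun n => c.proj n - c.proj (n + 1) ≫ t n)
  have ha : ∀ n, a ≫ c.proj n = c.proj n - c.proj (n + 1) ≫ t n := fun n =>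
    Fan.IsLimit.fac hc _ n
  let b : C ⟶ c.pt := Fan.IsLimit.lift hc i
  have hb : ∀ n, b ≫ c.proj n = i n := fun n => Fan.IsLimit.fac hc _ n
  have w : b ≫ a = 0 := by
    apply ext
    intro n
    rw [Category.assoc, ha, Preadditive.comp_sub, ← Category.assoc, hb, hb, ht, sub_self,
      zero_comp]
  let m : d.pt ⟶ c.pt := Fan.IsLimit.lift hc (fun n => d.proj n ≫ i n)
  have hm : ∀ n, m ≫ c.proj n = d.proj n ≫ i n := fun n => Fan.IsLimit.fac hc _ n
  have hmm : Epi m := by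
    have : ∀ k, Epi (m.f k) := by
      intro k
      let φ : Discrete.functor (fun _ : ℕ => C) ⋙ HomologicalComplex.eval A (ComplexShape.up ℤ) k ⟶
          Discrete.functor T ⋙ HomologicalComplex.eval A (ComplexShape.up ℤ) k :=
        Discrete.natTrans (fun n => (i n.as).f k)
      have : ∀ j, Epi (φ.app j) := fun j => inferInstanceAs (Epi ((i j.as).f k))
      refine lim_map_epi φ
        (isLimitOfPreserves (HomologicalComplex.eval A (ComplexShape.up ℤ) k) hd)
        (isLimitOfPreserves (HomologicalComplex.eval A (ComplexShape.up ℤ) k) hc) (m.f k)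
        (fun j => ?_)
      have := congrArg (fun f => HomologicalComplex.Hom.f f k) (hm j.as)
      exact this
    exact HomologicalComplex.epi_of_epi_f _ this
  have hma : Epi a := tele_epi i t ht c.proj ext d.proj
    (fun h => ⟨Fan.IsLimit.lift hd h, fun n => Fan.IsLimit.fac hd _ n⟩) m hm a ha
  have hSES : (ShortComplex.mk b a w).ShortExact := by
    apply HomologicalComplex.shortExact_of_degreewise_shortExact
    intro k
    have : Epi (a.f k) := inferInstance
    exact tele_op (fun n => (i n).f k) (fun n => (t n).f k)
      (fun n => by rw [← HomologicalComplex.comp_f, ht]) ((-k).toNat + 1)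
      (fun n hn => hiso n k (by omega)) (fun n => (c.proj n).f k) (deg_ext' hc k) (a.f k)
      (fun n => by rw [← HomologicalComplex.comp_f, ha]; rfl) (b.f k)
      (fun n => by rw [← HomologicalComplex.comp_f, hb])
      (by rw [← HomologicalComplex.comp_f, w]; rfl)
  have hT : ∀ n, onC P (T n) := by
    intro n
    refine bounded hP (N + 1 + n).toNat (T n) ?_ (-(n : ℤ)) ?_ ?_
    · exact HomologicalComplex.Acyclic.truncGE (K := C) hac _
    · intro k hk
      exact hzero n k hk
    · intro k hk
      have : Epi ((i n).f k) := inferInstance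
      exact IsZero.of_epi ((i n).f k) (hN k (by omega))
  have hW := prod_mem hc hQ hT
  exact ses₁ hP b a w hSES hW hW

end Stmt9

/-- In an abelian category with exact coproducts, any bounded below acyclic
complex is coacyclic; and in an abelian category with exact products, any bounded above
acyclic complex is contraacyclic. -/
theorem stmt_9 [HasCoproducts.{v} A] [AB4.{v} A] [HasProducts.{v} A] [AB4Star.{v} A]
    (C : CochainComplex A ℤ) (hac : ∀ n, C.ExactAt n) :
    ((∃ N : ℤ, ∀ n, n < N → IsZero (C.X n)) →
      IsCoacyclic ((HomotopyCategory.quotient A (ComplexShape.up ℤ)).obj C)) ∧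
    ((∃ N : ℤ, ∀ n, N < n → IsZero (C.X n)) →
      IsContraacyclic ((HomotopyCategory.quotient A (ComplexShape.up ℤ)).obj C)) := by
  constructor
  · rintro ⟨N, hN⟩ P hP hQ
    have : HasCoproducts.{0} A := hasCoproducts_shrink.{0, v}
    have : AB4OfSize.{0} A := AB4OfSize_shrink.{0, v} A
    exact Stmt9.co_main C hac N hN hP hQ
  · rintro ⟨N, hN⟩ P hP hQ
    have : HasProducts.{0} A := hasProducts_shrink.{0, v}
    have : AB4StarOfSize.{0} A := AB4StarOfSize_shrink.{0, v} A
    exact Stmt9.contra_main C hac N hN hP hQ
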